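/- If f is a Boolean function on the slice {x ∈ {0,1}^n : |x| = k} such that f⁻¹(1) is an independent set in the Johnson graph J(n,k), then D(f) ≥ log₂(|f⁻¹(1)|). -/

import Mathlib

/-- A deterministic decision tree querying variables indexed by `ι`. -/
inductive DTree (ι : Type) : Type where
  | leaf : Bool → DTree ι
  | node : ι → DTree ι → DTree ι → DTree ι

namespace DTree

/-- Evaluation of a decision tree on an input `x : ι → Bool`. -/
def eval {ι : Type} : DTree ι → (ι → Bool) → Bool
  | .leaf b, _ => b
  | .node i t0 t1, x => if x i then eval t1 x else eval t0 x

/-- The number of queries made by a decision tree on an input. -/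
def cost {ι : Type} : DTree ι → (ι → Bool) → ℕ
  | .leaf _, _ => 0
  | .node i t0 t1, x => 1 + (if x i then cost t1 x else cost t0 x)

end DTree

/-- `T` computes `f` on the domain `S`. -/
def Computes {ι : Type} (T : DTree ι) (S : Set (ι → Bool)) (f : (ι → Bool) → Bool) : Prop :=
  ∀ x ∈ S, T.eval x = f x

/-- Deterministic query complexity of `f` on the domain `S`: the least `d` such that some
decision tree computes `f` on `S` making at most `d` queries on every input in `S`. -/
noncomputable def Dquery {ι : Type} (S : Set (ι → Bool)) (f : (ι → Bool) → Bool) : ℕ :=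
  sInf {d | ∃ T : DTree ι, Computes T S f ∧ ∀ x ∈ S, T.cost x ≤ d}

/-- Hamming weight of `x : ι → Bool`. -/
def hamWeight {ι : Type} [Fintype ι] (x : ι → Bool) : ℕ :=
  (Finset.univ.filter fun i => x i = true).card

/-- The `k`-th cubeSlice: inputs of Hamming weight exactly `k`. -/
def cubeSlice (ι : Type) [Fintype ι] (k : ℕ) : Set (ι → Bool) :=
  {x | hamWeight x = k}

def DTree.same {ι : Type} : DTree ι → (ι → Bool) → (ι → Bool) → Prop
  | .leaf _, _, _ => True
  | .node i t0 t1, x, y => x i = y i ∧ (if x i then same t1 x y else same t0 x y)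

theorem DTree.eval_of_same {ι : Type} (T : DTree ι) (x y z : ι → Bool) (h : T.same x y)
    (hz : ∀ i, x i = y i → z i = x i) : T.eval z = T.eval x := by
  induction T with
  | leaf b => rfl
  | node i t0 t1 ih0 ih1 =>
    obtain ⟨h1, h2⟩ := h
    have h3 := hz i h1
    simp only [DTree.eval, h3]
    split_ifs at h2 ⊢ with hx
    · exact ih1 h2
    · exact ih0 h2

theorem DTree.card_le {ι : Type} (T : DTree ι) :
    ∀ (d : ℕ) (A : Finset (ι → Bool)), (∀ x ∈ A, T.cost x ≤ d) →
      (∀ x ∈ A, ∀ y ∈ A, T.same x y → x = y) → A.card ≤ 2 ^ d := by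
  induction T with
  | leaf b =>
    intro d A _ h
    have : A.card ≤ 1 := Finset.card_le_one.2 fun a ha b hb => h a ha b hb trivial
    exact this.trans Nat.one_le_two_pow
  | node i t0 t1 ih0 ih1 =>
    intro d A hc h
    rcases A.eq_empty_or_nonempty with rfl | ⟨a, ha⟩
    · simp
    obtain ⟨e, rfl⟩ : ∃ e, d = e + 1 := by
      have := hc a ha
      simp only [DTree.cost] at this
      exact ⟨d - 1, by omega⟩
    have e1 := ih1 e (A.filter fun x => x i = true) (by
      intro x hx
      rw [Finset.mem_filter] at hx
      have := hc x hx.1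
      simp only [DTree.cost, hx.2, if_true] at this
      omega) (by
      intro x hx y hy hs
      rw [Finset.mem_filter] at hx hy
      exact h x hx.1 y hy.1 ⟨by rw [hx.2, hy.2], by rw [if_pos hx.2]; exact hs⟩)
    have e0 := ih0 e (A.filter fun x => ¬ x i = true) (by
      intro x hx
      rw [Finset.mem_filter] at hx
      have := hc x hx.1
      simp only [DTree.cost, if_neg hx.2] at this
      omega) (by
      intro x hx y hy hs
      rw [Finset.mem_filter] at hx hy
      refine h x hx.1 y hy.1 ⟨?_, by rw [if_neg hx.2]; exact hs⟩
      rw [Bool.eq_false_of_not_eq_true hx.2, Bool.eq_false_of_not_eq_true hy.2])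
    have := Finset.card_filter_add_card_filter_not (s := A) (fun x => x i = true)
    rw [pow_succ]
    omega

theorem DTree.exists_tree {ι : Type} [DecidableEq ι] (s : Finset ι) :
    ∀ f : (ι → Bool) → Bool, (∀ x y, (∀ i ∈ s, x i = y i) → f x = f y) →
      ∃ T : DTree ι, ∀ x, T.eval x = f x := by
  induction s using Finset.induction_on with
  | empty =>
    intro f hf
    exact ⟨.leaf (f fun _ => false), fun x => hf _ _ (by simp)⟩
  | insert a s _ ih =>
    intro f hf
    have key : ∀ b : Bool, ∃ T : DTree ι, ∀ x, T.eval x = f (Function.update x a b) := by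
      intro b
      apply ih
      intro x y hxy
      apply hf
      intro i hi
      by_cases hia : i = a
      · subst hia; simp
      · simp only [Function.update_of_ne hia]
        exact hxy i ((Finset.mem_insert.1 hi).resolve_left hia)
    obtain ⟨T0, h0⟩ := key false
    obtain ⟨T1, h1⟩ := key true
    refine ⟨.node a T0 T1, fun x => ?_⟩
    simp only [DTree.eval]
    split_ifs with hx
    · rw [h1, ← hx, Function.update_eq_self]
    · rw [h0, ← Bool.eq_false_of_not_eq_true hx, Function.update_eq_self]

theorem hamWeight_swap {n : ℕ} (x : Fin n → Bool) (i j : Fin n) :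
    hamWeight (fun l => x (Equiv.swap i j l)) = hamWeight x := by
  unfold hamWeight
  apply Finset.card_bij (fun l _ => Equiv.swap i j l)
  · intro a ha; simpa using ha
  · intro a _ b _ hab; exact (Equiv.swap i j).injective hab
  · intro b hb; exact ⟨Equiv.swap i j b, by simpa using hb, by simp⟩

theorem exists_diff {n : ℕ} (x y : Fin n → Bool) (h : hamWeight x = hamWeight y) (hne : x ≠ y) :
    ∃ i, x i = true ∧ y i = false := by
  by_contra hcon
  push Not at hcon
  apply hne
  have hsub : (Finset.univ.filter fun i => x i = true) ⊆ Finset.univ.filter fun i => y i = true := by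
    intro i hi
    simp only [Finset.mem_filter, Finset.mem_univ, true_and] at hi ⊢
    simpa using hcon i hi
  have := Finset.eq_of_subset_of_card_le hsub h.ge
  funext i
  have h2 := Finset.ext_iff.1 this i
  simp only [Finset.mem_filter, Finset.mem_univ, true_and] at h2
  exact Bool.eq_iff_iff.2 h2

/-- If `f` is a Boolean function on the `k`-th slice of `{0,1}^n` whose set of 1-inputs is
an independent set in the Johnson graph `J(n,k)` (no two 1-inputs at Hamming distance 2),
then `D(f) ≥ log₂ |f⁻¹(1)|`. -/
theorem stmt10 (n k : ℕ) (f : (Fin n → Bool) → Bool)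
    (hind : ∀ x ∈ cubeSlice (Fin n) k, ∀ y ∈ cubeSlice (Fin n) k,
      f x = true → f y = true → hammingDist x y = 2 → False) :
    Real.logb 2
        ((Finset.univ.filter fun x : Fin n → Bool => hamWeight x = k ∧ f x = true).card) ≤
      (Dquery (cubeSlice (Fin n) k) f : ℝ) := by
  obtain ⟨T, hT, hTc⟩ : Dquery (cubeSlice (Fin n) k) f ∈
      {d | ∃ T : DTree (Fin n), Computes T (cubeSlice (Fin n) k) f ∧
        ∀ x ∈ cubeSlice (Fin n) k, T.cost x ≤ d} := by
    apply Nat.sInf_mem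
    obtain ⟨T, hT⟩ := DTree.exists_tree (Finset.univ : Finset (Fin n)) f
      (fun x y h => congrArg f (funext fun i => h i (Finset.mem_univ i)))
    exact ⟨Finset.univ.sup T.cost, T, fun x _ => hT x,
      fun x _ => Finset.le_sup (f := T.cost) (Finset.mem_univ x)⟩
  have hcard := T.card_le (Dquery (cubeSlice (Fin n) k) f)
    (Finset.univ.filter fun x : Fin n → Bool => hamWeight x = k ∧ f x = true)
    (fun x hx => hTc x (Finset.mem_filter.1 hx).2.1) (by
      intro x hx y hy hs
      by_contra hne
      obtain ⟨hxk, hfx⟩ := (Finset.mem_filter.1 hx).2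
      obtain ⟨hyk, hfy⟩ := (Finset.mem_filter.1 hy).2
      obtain ⟨i, hxi, hyi⟩ := exists_diff x y (hxk.trans hyk.symm) hne
      obtain ⟨j, hyj, hxj⟩ := exists_diff y x (hyk.trans hxk.symm) (Ne.symm hne)
      have hij : i ≠ j := by
        rintro rfl
        rw [hxi] at hxj
        cases hxj
      have hz : hamWeight (fun l => x (Equiv.swap i j l)) = k := (hamWeight_swap x i j).trans hxk
      have hev := T.eval_of_same x y (fun l => x (Equiv.swap i j l)) hs (by
        intro l hl
        have h1 : l ≠ i := by
          rintro rfl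
          rw [hxi, hyi] at hl
          cases hl
        have h2 : l ≠ j := by
          rintro rfl
          rw [hxj, hyj] at hl
          cases hl
        simp only [Equiv.swap_apply_of_ne_of_ne h1 h2])
      rw [hT _ hz, hT x hxk, hfx] at hev
      refine hind x hxk _ hz hfx hev ?_
      have hset : (Finset.univ.filter fun l => x l ≠ x (Equiv.swap i j l)) = {i, j} := by
        ext l
        simp only [Finset.mem_filter, Finset.mem_univ, true_and, Finset.mem_insert,
          Finset.mem_singleton]
        by_cases h1 : l = i
        · subst h1; simp [hxi, hxj]
        by_cases h2 : l = j
        · subst h2; simp [hxi, hxj]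
        simp [Equiv.swap_apply_of_ne_of_ne h1 h2, h1, h2]
      unfold hammingDist
      rw [hset, Finset.card_pair hij])
  generalize (Finset.univ.filter fun x : Fin n → Bool => hamWeight x = k ∧ f x = true).card = c
    at hcard ⊢
  rcases Nat.eq_zero_or_pos c with rfl | hpos
  · simp
  rw [Real.logb_le_iff_le_rpow (by norm_num) (by exact_mod_cast hpos), Real.rpow_natCast]
  exact_mod_cast hcard
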